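/- For a central concircular tensor L = A + r ⊗ r^♭ on E^n_ν with A = diag(λ₁,…,λₙ) and metric g = diag(ε₁,…,εₙ), writing B(z) = det(zI − A) = Σ_{l=0}^{n} a_l z^l, the characteristic polynomial of L is p(z) = det(zI − L) = Σ_{l=0}^{n} ( a_l − Σ_{j=0}^{n−1−l} a_{j+1+l} ⟨r, Aʲ r⟩ ) z^l, where ⟨r, Aʲr⟩ = Σᵢ εᵢ λᵢʲ (xⁱ)². -/

import Mathlib

/-!
For any square matrix `A` of size `n`, the matrix determinant lemma gives
`det(zI − A − u vᵀ) = det(zI − A) − vᵀ adj(zI − A) u`. If `B = Σ a_l z^l` is the characteristic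
polynomial of `A`, then `B(z)I = B(z)I − B(A)` by Cayley–Hamilton, and dividing by `zI − A`, term by
term through geometric sums, gives `adj(zI − A) = Σ_l Σ_j a_{j+1+l} z^l A^j`. The theorem is the
case of a diagonal `A`, with `u = r` and `v = r^♭`.
-/

open Finset Matrix Polynomial

section CommRing

variable {R ι : Type*} [CommRing R]

theorem sum_coeff_smul_pow_mul_pow_mul_sub {S : Type*} [Ring S] [Algebra R S] {x y : S}
    (hxy : Commute x y) {p : R[X]} {n : ℕ} (hp : p.natDegree ≤ n) :
    (∑ l ∈ range n, ∑ j ∈ range (n - l), p.coeff (j + 1 + l) • (x ^ l * y ^ j)) * (x - y) =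
      aeval x p - aeval y p := by
  calc
    _ = (∑ m ∈ range n, p.coeff (m + 1) • ∑ l ∈ range (m + 1), x ^ l * y ^ (m - l)) * (x - y) := by
      rw [← sum_range_diag_flip n fun l j ↦ p.coeff (j + 1 + l) • (x ^ l * y ^ j)]
      congr 1
      refine sum_congr rfl fun m _ ↦ ?_
      rw [smul_sum]
      refine sum_congr rfl fun l hl ↦ ?_
      rw [show m - l + 1 + l = m + 1 by grind]
    _ = ∑ m ∈ range n, p.coeff (m + 1) • (x ^ (m + 1) - y ^ (m + 1)) := by
      rw [sum_mul]
      refine sum_congr rfl fun m _ ↦ ?_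
      rw [smul_mul_assoc, ← hxy.geom_sum₂_mul, Nat.add_sub_cancel]
    _ = aeval x p - aeval y p := by
      rw [aeval_eq_sum_range' (Nat.lt_succ_of_le hp), aeval_eq_sum_range' (Nat.lt_succ_of_le hp),
        ← sum_sub_distrib, sum_range_succ']
      simp only [smul_sub, pow_zero, sub_self, add_zero]

theorem coeff_eq_of_forall_eval_eq_sum [IsDomain R] [Infinite R] {p : R[X]} {N : ℕ} {a : ℕ → R}
    (h : ∀ z, p.eval z = ∑ l ∈ range N, a l * z ^ l) {l : ℕ} (hl : l < N) :
    p.coeff l = a l := by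
  have hp : p = ∑ l ∈ range N, C (a l) * X ^ l :=
    Polynomial.funext fun z ↦ by simp [h z, eval_finsetSum]
  simp [hp, hl]

variable [Fintype ι] [DecidableEq ι]

theorem det_updateRow_add_vecMulVec (M : Matrix ι ι R) (u v : ι → R) (i : ι) :
    ((M + vecMulVec u v).updateRow i v).det = (M.updateRow i v).det := by
  refine det_eq_of_forall_row_eq_smul_add_const (Function.update u i 0) i (by simp) fun k j ↦ ?_
  rcases eq_or_ne k i with rfl | hk
  · simp
  · simp [hk, vecMulVec_apply]

theorem dotProduct_adjugate_mulVec_single (M : Matrix ι ι R) (v : ι → R) (i : ι) (c : R) :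
    v ⬝ᵥ M.adjugate *ᵥ Pi.single i c = c * (M.updateRow i v).det := by
  rw [dotProduct_mulVec, dotProduct_single, mul_comm, ← cramer_transpose_apply,
    cramer_eq_adjugate_mulVec, ← adjugate_transpose, mulVec_transpose]

theorem det_add_vecMulVec (M : Matrix ι ι R) (u v : ι → R) :
    (M + vecMulVec u v).det = M.det + v ⬝ᵥ M.adjugate *ᵥ u := by
  suffices h : ∀ w, (M + vecMulVec (w + u) v).det =
      (M + vecMulVec w v).det + v ⬝ᵥ M.adjugate *ᵥ u by simpa using h 0
  induction u using Pi.single_induction with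
  | zero => simp
  | add u₁ u₂ h₁ h₂ =>
    intro w
    rw [← add_assoc, h₂, h₁, mulVec_add, dotProduct_add, add_assoc]
  | single i c =>
    intro w
    have hrow : M + vecMulVec (w + Pi.single i c) v =
        (M + vecMulVec w v).updateRow i ((M + vecMulVec w v) i + c • v) := by
      ext k j
      rcases eq_or_ne k i with rfl | hk
      · simp [vecMulVec_apply, add_mul, add_assoc]
      · simp [vecMulVec_apply, hk]
    rw [hrow, det_updateRow_add, updateRow_eq_self, det_updateRow_smul,
      det_updateRow_add_vecMulVec, dotProduct_adjugate_mulVec_single]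

theorem eq_adjugate_of_mul_eq {M N : Matrix ι ι R} (hM : IsLeftRegular M.det)
    (h : N * M = M.det • 1) : N = M.adjugate := by
  have hdet : M.det • N = M.det • M.adjugate := by
    rw [← Matrix.mul_one N, ← Matrix.mul_smul, ← mul_adjugate, ← Matrix.mul_assoc, h,
      Matrix.smul_mul, Matrix.one_mul]
  ext i j
  exact hM (congr_fun₂ hdet i j)

theorem adjugate_charmatrix (A : Matrix ι ι R) :
    A.charmatrix.adjugate = ∑ l ∈ range (Fintype.card ι), ∑ j ∈ range (Fintype.card ι - l),
      (C (A.charpoly.coeff (j + 1 + l)) * X ^ l) • (A ^ j).map C := by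
  nontriviality R
  set x : Matrix ι ι R[X] := algebraMap R[X] _ X
  set y : Matrix ι ι R[X] := (CAlgHom (R := R)).mapMatrix A
  have hx : aeval x A.charpoly = A.charpoly • 1 := by
    rw [aeval_algebraMap_apply, aeval_X_left_apply, Algebra.algebraMap_eq_smul_one]
  have hy : aeval y A.charpoly = 0 := by
    rw [aeval_algHom_apply, aeval_self_charpoly, map_zero]
  have hxy : Commute x y := Algebra.commute_algebraMap_left _ y
  have hdiv := sum_coeff_smul_pow_mul_pow_mul_sub hxy A.charpoly_natDegree_eq_dim.le
  rw [hx, hy, sub_zero] at hdiv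
  rw [← eq_adjugate_of_mul_eq A.charpoly_monic.isRegular.left hdiv]
  refine sum_congr rfl fun l _ ↦ sum_congr rfl fun j _ ↦ ?_
  have hxl : x ^ l = algebraMap R[X] _ (X ^ l) := (map_pow _ _ _).symm
  have hyj : y ^ j = (A ^ j).map C := (map_pow _ _ _).symm
  rw [hxl, hyj, ← Algebra.smul_def, ← smul_eq_C_mul, smul_assoc]

theorem charpoly_add_vecMulVec (A : Matrix ι ι R) (u v : ι → R) :
    (A + vecMulVec u v).charpoly = A.charpoly -
      ∑ l ∈ range (Fintype.card ι), ∑ j ∈ range (Fintype.card ι - l),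
        C (A.charpoly.coeff (j + 1 + l) * (v ⬝ᵥ A ^ j *ᵥ u)) * X ^ l := by
  have hcharmatrix : (A + vecMulVec u v).charmatrix =
      A.charmatrix + vecMulVec (-(C ∘ u)) (C ∘ v) := by
    ext i j : 1
    simp only [charmatrix_apply, Matrix.add_apply, vecMulVec_apply, map_add, map_mul, Pi.neg_apply,
      Function.comp_apply]
    ring
  have hC (M : Matrix ι ι R) : (C ∘ v) ⬝ᵥ M.map C *ᵥ (C ∘ u) = C (v ⬝ᵥ M *ᵥ u) := by
    simp [dotProduct, mulVec]
  rw [charpoly, hcharmatrix, det_add_vecMulVec, mulVec_neg, dotProduct_neg, ← sub_eq_add_neg,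
    adjugate_charmatrix, ← charpoly]
  simp only [sum_mulVec, dotProduct_sum, smul_mulVec, dotProduct_smul, hC, smul_eq_mul, C_mul,
    mul_right_comm]

theorem coeff_charpoly_add_vecMulVec (A : Matrix ι ι R) (u v : ι → R) (l : ℕ) :
    (A + vecMulVec u v).charpoly.coeff l = A.charpoly.coeff l -
      ∑ j ∈ range (Fintype.card ι - l), A.charpoly.coeff (j + 1 + l) * (v ⬝ᵥ A ^ j *ᵥ u) := by
  simp only [charpoly_add_vecMulVec, coeff_sub, ← sum_mul, ← map_sum, finsetSum_coeff,
    coeff_C_mul_X_pow, sum_ite_eq, mem_range]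
  split_ifs with hl
  · rfl
  · rw [Nat.sub_eq_zero_of_le (not_lt.mp hl), range_zero, sum_empty]

theorem stmt_7_general [IsDomain R] [Infinite R] (A : Matrix ι ι R) (u v : ι → R) (a : ℕ → R)
    (ha : ∀ z : R, (z • (1 : Matrix ι ι R) - A).det =
      ∑ l ∈ range (Fintype.card ι + 1), a l * z ^ l) (z : R) :
    (z • (1 : Matrix ι ι R) - (A + vecMulVec u v)).det =
      ∑ l ∈ range (Fintype.card ι + 1),
        (a l - ∑ j ∈ range (Fintype.card ι - l), a (j + 1 + l) * (v ⬝ᵥ A ^ j *ᵥ u)) * z ^ l := by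
  have heval (M : Matrix ι ι R) (z : R) : M.charpoly.eval z = (z • 1 - M).det := by
    rw [Matrix.eval_charpoly, scalar_apply, smul_one_eq_diagonal]
  have hcoeff {l : ℕ} (hl : l < Fintype.card ι + 1) : A.charpoly.coeff l = a l :=
    coeff_eq_of_forall_eval_eq_sum (fun z ↦ (heval A z).trans (ha z)) hl
  rw [← heval, eval_eq_sum_range' (Nat.lt_succ_of_le (charpoly_natDegree_eq_dim _).le)]
  refine sum_congr rfl fun l hl ↦ ?_
  rw [coeff_charpoly_add_vecMulVec, hcoeff (mem_range.mp hl)]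
  congr 2
  exact sum_congr rfl fun j hj ↦ by rw [hcoeff (by grind)]

end CommRing

/-- Characteristic polynomial of a central concircular tensor in expanded form: if
`B(z) = ∏ᵢ(z − λᵢ) = Σ_l a_l z^l`, then
`det(zI − L) = Σ_l ( a_l − Σ_{j=0}^{n−1−l} a_{j+1+l} ⟨r, Aʲ r⟩ ) z^l`,
where `⟨r, Aʲ r⟩ = Σᵢ εᵢ λᵢʲ (xⁱ)²`. -/
theorem stmt_7 {n : ℕ} (lam ε x : Fin n → ℝ) (hε : ∀ i, ε i = 1 ∨ ε i = -1)
    (a : ℕ → ℝ)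
    (ha : ∀ z : ℝ, (∏ i, (z - lam i)) = ∑ l ∈ Finset.range (n + 1), a l * z ^ l) :
    ∀ z : ℝ,
      (z • (1 : Matrix (Fin n) (Fin n) ℝ)
        - (Matrix.diagonal lam + Matrix.vecMulVec x (fun j => ε j * x j))).det
      = ∑ l ∈ Finset.range (n + 1),
          (a l - ∑ j ∈ Finset.range (n - l),
            a (j + 1 + l) * ∑ i, ε i * lam i ^ j * (x i) ^ 2) * z ^ l := by
  have hr (j : ℕ) : (fun i ↦ ε i * x i) ⬝ᵥ diagonal lam ^ j *ᵥ x =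
      ∑ i, ε i * lam i ^ j * x i ^ 2 := by
    simp only [diagonal_pow, dotProduct, mulVec_diagonal, Pi.pow_apply]
    exact sum_congr rfl fun i _ ↦ by ring
  simpa only [hr, Fintype.card_fin] using stmt_7_general (diagonal lam) x (fun i ↦ ε i * x i) a
    (by simpa [smul_one_eq_diagonal, diagonal_sub] using ha)
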